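/- arXiv:1603.01078 — 3 statements merged into one kernel-verified Lean document; each statement's English description precedes it below -/
import Mathlib

section
/- Let S be a numerical semigroup minimally generated by n_1 < … < n_d, let k be a field and let s ∈ S. The following are equivalent: (1) AP(S,s) is homogeneous; (2) for every factorization c of s there exists a minimal generating set E of the toric ideal I_S consisting of binomials such that every non-homogeneous element of E has one of its two monomials divisible by x^c. -/
open scoped BigOperators

/-- The value `Σ aᵢ nᵢ` of a tuple of coefficients `a` w.r.t. the generators `n`. -/
def sval {d : ℕ} (n : Fin d → ℕ) (a : Fin d → ℕ) : ℕ := ∑ i, a i * n i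

/-- The total length `Σ aᵢ` of a factorization. -/
def tlen {d : ℕ} (a : Fin d → ℕ) : ℕ := ∑ i, a i

/-- The submonoid of `ℕ` generated by `n`. -/
def gen {d : ℕ} (n : Fin d → ℕ) : Set ℕ := {s : ℕ | ∃ a : Fin d → ℕ, s = sval n a}

/-- The Apéry set of the semigroup generated by `n` with respect to `s`:
elements `x` of the semigroup such that `x - s` is not in the semigroup. -/
def Apery {d : ℕ} (n : Fin d → ℕ) (s : ℕ) : Set ℕ :=
  {x : ℕ | x ∈ gen n ∧ ¬ ∃ y ∈ gen n, x = s + y}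

/-- A subset `T` is homogeneous if every nonzero element of `T` has all its
factorizations of the same length. -/
def HomogSet {d : ℕ} (n : Fin d → ℕ) (T : Set ℕ) : Prop :=
  ∀ t ∈ T, t ≠ 0 → ∀ a b : Fin d → ℕ, sval n a = t → sval n b = t → tlen a = tlen b

/-- The order of `s`: the maximal length of a factorization of `s`. -/
noncomputable def ordS {d : ℕ} (n : Fin d → ℕ) (s : ℕ) : ℕ :=
  sSup {l : ℕ | ∃ a : Fin d → ℕ, sval n a = s ∧ tlen a = l}

/-- The torsion set of the semigroup generated by `n`, with respect to the
generator of index `i0` (the smallest generator). -/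
noncomputable def Torsion {d : ℕ} (n : Fin d → ℕ) (i0 : Fin d) : Set ℕ :=
  {s : ℕ | s ∈ gen n ∧ ∃ c : ℕ, 0 < c ∧ ordS n s + c < ordS n (s + c * n i0)}

/-- `n` is a minimal system of generators: any expression of a generator as a
nonnegative combination of the generators has total coefficient sum one. -/
def MinGen {d : ℕ} (n : Fin d → ℕ) : Prop :=
  ∀ r : Fin d, ∀ a : Fin d → ℕ, n r = sval n a → tlen a = 1

/-- `n` generates a numerical semigroup (cofinite in `ℕ`). -/
def IsNumerical {d : ℕ} (n : Fin d → ℕ) : Prop := {x : ℕ | x ∉ gen n}.Finite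

/-- The monomial `x^a = Π xᵢ^{aᵢ}`. -/
noncomputable def monom (k : Type*) [CommRing k] {d : ℕ} (a : Fin d → ℕ) :
    MvPolynomial (Fin d) k :=
  ∏ i, (MvPolynomial.X i : MvPolynomial (Fin d) k) ^ a i

/-- The toric ideal `I_S`: kernel of `k[x₁,…,x_d] → k[t]`, `xᵢ ↦ t^{nᵢ}`. -/
noncomputable def toricIdeal (k : Type*) [CommRing k] {d : ℕ} (n : Fin d → ℕ) :
    Ideal (MvPolynomial (Fin d) k) :=
  RingHom.ker (MvPolynomial.aeval (R := k)
    (fun i => (Polynomial.X : Polynomial k) ^ n i)).toRingHom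

/-- `E` is a minimal generating set of the ideal `I`: it spans `I` and no
proper subset spans `I`. -/
def IsMinGenSet {R : Type*} [CommRing R] (I : Ideal R) (E : Set R) : Prop :=
  Ideal.span E = I ∧ ∀ E' : Set R, E' ⊂ E → Ideal.span E' ≠ I

/-- Membership of an integer in the semigroup generated by `n`. -/
def memZ {d : ℕ} (n : Fin d → ℕ) (z : ℤ) : Prop := ∃ x ∈ gen n, (x : ℤ) = z

/-- A numerical semigroup with Frobenius number `F = max (ℤ ∖ S)` is symmetric
if for every integer `z`, `z ∈ S ↔ F - z ∉ S`. -/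
def IsSymmetric {d : ℕ} (n : Fin d → ℕ) : Prop :=
  ∃ F : ℤ, ¬ memZ n F ∧ (∀ z : ℤ, F < z → memZ n z) ∧
    ∀ z : ℤ, memZ n z ↔ ¬ memZ n (F - z)

/-- A numerical semigroup with Frobenius number `F = max (ℤ ∖ S)` is
pseudo-symmetric if `F` is even and for every integer `z`,
`z ∈ S ↔ (z ≠ F/2 ∧ F - z ∉ S)`. -/
def IsPseudoSymmetric {d : ℕ} (n : Fin d → ℕ) : Prop :=
  ∃ F : ℤ, ¬ memZ n F ∧ (∀ z : ℤ, F < z → memZ n z) ∧ F % 2 = 0 ∧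
    ∀ z : ℤ, memZ n z ↔ (z ≠ F / 2 ∧ ¬ memZ n (F - z))

/-- The generators `q·m₁,…,q·m_d, p·n₁,…,p·n_e` of the gluing of two numerical
semigroups. -/
def glueGen {d e : ℕ} (mg : Fin d → ℕ) (ng : Fin e → ℕ) (p q : ℕ) :
    Fin (d + e) → ℕ :=
  Fin.append (fun i => q * mg i) (fun i => p * ng i)
theorem monom_eq (k : Type*) [CommRing k] {d : ℕ} (a : Fin d → ℕ) :
    monom k a = MvPolynomial.monomial (Finsupp.equivFunOnFinite.symm a) (1 : k) := by
  rw [MvPolynomial.monomial_eq]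
  simp [monom, Finsupp.prod_fintype]

theorem sval_add {d : ℕ} (n a b : Fin d → ℕ) : sval n (a + b) = sval n a + sval n b := by
  simp [sval, add_mul, Finset.sum_add_distrib]

theorem tlen_add {d : ℕ} (a b : Fin d → ℕ) : tlen (a + b) = tlen a + tlen b := by
  simp [tlen, Finset.sum_add_distrib]

theorem monom_add (k : Type*) [CommRing k] {d : ℕ} (a b : Fin d → ℕ) :
    monom k (a + b) = monom k a * monom k b := by
  simp [monom, pow_add, Finset.prod_mul_distrib]

theorem aeval_monom (k : Type*) [CommRing k] {d : ℕ} (n a : Fin d → ℕ) :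
    MvPolynomial.aeval (R := k) (fun i => (Polynomial.X : Polynomial k) ^ n i) (monom k a)
      = Polynomial.X ^ sval n a := by
  simp only [monom, sval, map_prod, map_pow, MvPolynomial.aeval_X]
  rw [← Finset.prod_pow_eq_pow_sum]
  refine Finset.prod_congr rfl fun i _ => ?_
  rw [← pow_mul, mul_comm]

theorem mem_toric (k : Type*) [Field k] {d : ℕ} (n a b : Fin d → ℕ) :
    monom k a - monom k b ∈ toricIdeal k n ↔ sval n a = sval n b := by
  unfold toricIdeal
  rw [RingHom.mem_ker]
  change MvPolynomial.aeval (R := k) (fun i => (Polynomial.X : Polynomial k) ^ n i) _ = 0 ↔ _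
  rw [map_sub, aeval_monom, aeval_monom, sub_eq_zero]
  constructor
  · intro h
    simpa using congrArg Polynomial.natDegree h
  · intro h
    rw [h]

theorem monom_inj (k : Type*) [Field k] {d : ℕ} {a b : Fin d → ℕ}
    (h : monom k a = monom k b) : a = b := by
  rw [monom_eq, monom_eq] at h
  exact Finsupp.equivFunOnFinite.symm.injective
    (MvPolynomial.monomial_left_injective (one_ne_zero (α := k)) h)

theorem monom_dvd (k : Type*) [Field k] {d : ℕ} {c a : Fin d → ℕ}
    (h : monom k c ∣ monom k a) : ∃ e, a = c + e := by
  rw [monom_eq, monom_eq, MvPolynomial.monomial_dvd_monomial] at h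
  have h2 := h.1.resolve_left one_ne_zero
  refine ⟨a - c, ?_⟩
  funext i
  have := h2 i
  simp at this
  simp; omega

theorem coeff_monom (k : Type*) [Field k] {d : ℕ} (a b : Fin d → ℕ) :
    MvPolynomial.coeff (Finsupp.equivFunOnFinite.symm b) (monom k a) =
      if a = b then (1 : k) else 0 := by
  rw [monom_eq, MvPolynomial.coeff_monomial]
  simp

theorem binom_unique (k : Type*) [Field k] {d : ℕ} {a b a' b' : Fin d → ℕ} (hab : a ≠ b)
    (h : monom k a - monom k b = monom k a' - monom k b') :
    (a = a' ∧ b = b') ∨ (a = b' ∧ b = a') := by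
  have h1 := congrArg (MvPolynomial.coeff (Finsupp.equivFunOnFinite.symm a)) h
  have h2 := congrArg (MvPolynomial.coeff (Finsupp.equivFunOnFinite.symm b)) h
  simp only [MvPolynomial.coeff_sub, coeff_monom, if_true, if_neg hab, if_neg hab.symm] at h1 h2
  have e1 : a' = a ∨ b' = a := by
    by_contra! hc
    simp [hc] at h1
  have e2 : a' = b ∨ b' = b := by
    by_contra! hc
    simp [hc] at h2
  grind

/-- Any set of polynomials through which all toric binomials are generated spans. -/
theorem toric_le (k : Type*) [Field k] {d : ℕ} (n : Fin d → ℕ)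
    (J : Ideal (MvPolynomial (Fin d) k))
    (hJ : ∀ a b : Fin d → ℕ, sval n a = sval n b → monom k a - monom k b ∈ J) :
    toricIdeal k n ≤ J := by
  classical
  intro p hp
  have hp0 : MvPolynomial.aeval (R := k) (fun i => (Polynomial.X : Polynomial k) ^ n i) p = 0 := hp
  let r : ℕ → (Fin d → ℕ) := fun m => if h : ∃ a, sval n a = m then h.choose else 0
  have hr : ∀ a, sval n (r (sval n a)) = sval n a := by
    intro a
    have h : ∃ b, sval n b = sval n a := ⟨a, rfl⟩
    simp only [r, dif_pos h]
    exact h.choose_spec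
  let g : Polynomial k →ₗ[k] MvPolynomial (Fin d) k :=
    (Polynomial.basisMonomials k).constr k fun m => monom k (r m)
  have hg : ∀ m, g (Polynomial.X ^ m) = monom k (r m) := by
    intro m
    have := (Polynomial.basisMonomials k).constr_basis k (fun m => monom k (r m)) m
    rw [Polynomial.coe_basisMonomials] at this
    beta_reduce at this
    rwa [Polynomial.monomial_one_right_eq_X_pow] at this
  have key : ∀ q : MvPolynomial (Fin d) k,
      q - g (MvPolynomial.aeval (R := k) (fun i => (Polynomial.X : Polynomial k) ^ n i) q) ∈ J := by
    intro q
    induction q using MvPolynomial.induction_on' with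
    | monomial u c =>
      have e : MvPolynomial.monomial u c = c • monom k (u : Fin d → ℕ) := by
        rw [monom_eq, MvPolynomial.smul_monomial]
        simp
      rw [e, map_smul, map_smul, aeval_monom, hg, ← smul_sub, MvPolynomial.smul_eq_C_mul]
      exact J.mul_mem_left _ (hJ _ _ (hr _).symm)
    | add p q hp hq =>
      rw [map_add, map_add, add_sub_add_comm]
      exact J.add_mem hp hq
  have := key p
  rwa [hp0, map_zero, sub_zero] at this

theorem exists_min_sub {R : Type*} [CommRing R] [IsNoetherianRing R] (B : Set R) :
    ∃ E ⊆ B, IsMinGenSet (Ideal.span B) E := by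
  obtain ⟨T, hTB, hT⟩ := (Submodule.fg_span_iff_fg_span_finset_subset B).1
    (IsNoetherian.noetherian (Ideal.span B))
  obtain ⟨E, hET, hE⟩ := exists_minimal_le_of_wellFoundedLT
    (fun F : Finset R => Ideal.span (F : Set R) = Ideal.span B) T hT.symm
  refine ⟨E, (Finset.coe_subset.2 hET).trans hTB, hE.1, ?_⟩
  intro E' hE' hs
  have hfin : E'.Finite := E.finite_toSet.subset hE'.1
  have h1 : hfin.toFinset ≤ E := by
    intro x hx
    exact hE'.1 (hfin.mem_toFinset.1 hx)
  have h2 := hE.2 (y := hfin.toFinset) (by simpa using hs) h1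
  apply hE'.2
  intro x hx
  exact hfin.mem_toFinset.1 (h2 hx)

/-- `AP(S,s)` is homogeneous iff for every factorization `c` of
`s` there is a minimal binomial generating set of `I_S` each of whose
non-homogeneous elements has a monomial divisible by `x^c`. -/
theorem statement2 {d : ℕ} (hd : 0 < d) (k : Type*) [Field k]
    (n : Fin d → ℕ) (hmono : StrictMono n) (hpos : 0 < n ⟨0, hd⟩)
    (hnum : IsNumerical n) (hmin : MinGen n) (s : ℕ) (hs : s ∈ gen n) :
    HomogSet n (Apery n s) ↔
      ∀ c : Fin d → ℕ, sval n c = s →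
        ∃ E : Set (MvPolynomial (Fin d) k),
          IsMinGenSet (toricIdeal k n) E ∧
          (∀ f ∈ E, ∃ a b : Fin d → ℕ, f = monom k a - monom k b) ∧
          (∀ a b : Fin d → ℕ, monom k a - monom k b ∈ E → tlen a ≠ tlen b →
            (monom k c ∣ monom k a ∨ monom k c ∣ monom k b)) := by
  have hn : ∀ i, 0 < n i := fun i => lt_of_lt_of_le hpos (hmono.monotone (Nat.zero_le _))
  constructor
  · intro hom c hc
    let B : Set (MvPolynomial (Fin d) k) := {f | ∃ a b : Fin d → ℕ, f = monom k a - monom k b ∧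
      sval n a = sval n b ∧
      (tlen a ≠ tlen b → (monom k c ∣ monom k a ∨ monom k c ∣ monom k b))}
    have hB : Ideal.span B = toricIdeal k n := by
      apply le_antisymm
      · rw [Ideal.span_le]
        rintro f ⟨a, b, rfl, hab, -⟩
        exact (mem_toric k n a b).2 hab
      · apply toric_le
        intro a b hab
        by_cases hl : tlen a = tlen b
        · exact Ideal.subset_span ⟨a, b, rfl, hab, fun h => absurd hl h⟩
        · have hA : sval n a ∉ Apery n s := by
            intro hA
            by_cases h0 : sval n a = 0
            · have hz : ∀ x : Fin d → ℕ, sval n x = 0 → tlen x = 0 := by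
                intro x hx
                simp only [sval, Finset.sum_eq_zero_iff, Finset.mem_univ, true_implies,
                  mul_eq_zero] at hx
                simp only [tlen, Finset.sum_eq_zero_iff, Finset.mem_univ, true_implies]
                exact fun i => (hx i).resolve_right (hn i).ne'
              exact hl ((hz a h0).trans (hz b (hab ▸ h0)).symm)
            · exact hl (hom _ hA h0 a b rfl hab.symm)
          have : ∃ y ∈ gen n, sval n a = s + y := by
            by_contra hc'
            exact hA ⟨⟨a, rfl⟩, hc'⟩
          obtain ⟨y, ⟨e, rfl⟩, hy⟩ := this
          have hce : sval n (c + e) = sval n a := by rw [sval_add, hc, hy]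
          have hd1 : monom k c ∣ monom k (c + e) := by
            rw [monom_add]; exact dvd_mul_right _ _
          have m1 : monom k a - monom k (c + e) ∈ Ideal.span B :=
            Ideal.subset_span ⟨a, c + e, rfl, hce.symm, fun _ => Or.inr hd1⟩
          have m2 : monom k b - monom k (c + e) ∈ Ideal.span B :=
            Ideal.subset_span ⟨b, c + e, rfl, hab.symm.trans hce.symm, fun _ => Or.inr hd1⟩
          have := Ideal.sub_mem _ m1 m2
          rwa [sub_sub_sub_cancel_right] at this
    obtain ⟨E, hEB, hE⟩ := exists_min_sub B
    rw [hB] at hE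
    refine ⟨E, hE, ?_, ?_⟩
    · intro f hf
      obtain ⟨a, b, h, -⟩ := hEB hf
      exact ⟨a, b, h⟩
    · intro a b hf hl
      obtain ⟨a', b', h, -, h3⟩ := hEB hf
      have hne : a ≠ b := fun h => hl (h ▸ rfl)
      rcases binom_unique k hne h with ⟨rfl, rfl⟩ | ⟨rfl, rfl⟩
      · exact h3 hl
      · exact (h3 hl.symm).symm
  · intro H t ht ht0 a b ha hb
    obtain ⟨c, hc⟩ := hs
    obtain ⟨E, hE, hbin, hE3⟩ := H c hc.symm
    by_contra hl
    -- the functional summing coefficients of monomials of value `t` and length `tlen a`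
    let φ : MvPolynomial (Fin d) k →ₗ[k] k := (MvPolynomial.basisMonomials (Fin d) k).constr k
      fun u => if sval n u = t ∧ tlen (u : Fin d → ℕ) = tlen a then (1 : k) else 0
    have hφ : ∀ u : Fin d → ℕ, φ (monom k u) =
        if sval n u = t ∧ tlen u = tlen a then (1 : k) else 0 := by
      intro u
      have := (MvPolynomial.basisMonomials (Fin d) k).constr_basis k
        (fun u => if sval n u = t ∧ tlen (u : Fin d → ℕ) = tlen a then (1 : k) else 0)
        (Finsupp.equivFunOnFinite.symm u)
      rw [MvPolynomial.coe_basisMonomials] at this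
      beta_reduce at this
      rw [← monom_eq] at this
      exact this
    have hnot : ∀ u w : Fin d → ℕ, monom k c ∣ monom k u → sval n (w + u) ≠ t := by
      intro u w hdv he
      obtain ⟨e, rfl⟩ := monom_dvd k hdv
      apply ht.2
      refine ⟨_, ⟨w + e, rfl⟩, ?_⟩
      rw [← he, hc]
      simp only [sval_add]
      omega
    have hgen : ∀ f ∈ E, ∀ q : MvPolynomial (Fin d) k, φ (q * f) = 0 := by
      intro f hf q
      obtain ⟨u, v, rfl⟩ := hbin f hf
      have huv : sval n u = sval n v :=
        (mem_toric k n u v).1 (hE.1 ▸ Ideal.subset_span hf)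
      induction q using MvPolynomial.induction_on' with
      | monomial w r =>
        have e : MvPolynomial.monomial w r = r • monom k (w : Fin d → ℕ) := by
          rw [monom_eq, MvPolynomial.smul_monomial]
          simp
        rw [e, smul_mul_assoc, map_smul, mul_sub, ← monom_add, ← monom_add, map_sub, hφ, hφ]
        have hs' : sval n (w + u) = sval n (w + v) := by rw [sval_add, sval_add, huv]
        by_cases hlen : tlen u = tlen v
        · rw [hs', tlen_add, tlen_add, hlen, sub_self, smul_zero]
        · have hne : sval n (w + u) ≠ t := by
            rcases hE3 u v hf hlen with h | h
            · exact hnot u w h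
            · rw [hs']; exact hnot v w h
          rw [if_neg (fun h => hne h.1), if_neg (fun h => hne (hs'.trans h.1)), sub_self,
            smul_zero]
      | add p q hp hq => rw [add_mul, map_add, hp, hq, add_zero]
    have hall : ∀ f ∈ Ideal.span E, φ f = 0 := by
      intro f hf
      induction hf using Submodule.span_induction with
      | mem x hx => simpa using hgen x hx 1
      | zero => simp
      | add x y _ _ hx hy => rw [map_add, hx, hy, add_zero]
      | smul q x hx' hx =>
        rw [smul_eq_mul]
        clear hx
        induction hx' using Submodule.span_induction generalizing q with
        | mem x hx => exact hgen x hx q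
        | zero => simp
        | add x y _ _ hx hy => rw [mul_add, map_add, hx, hy, add_zero]
        | smul r x _ hx => rw [smul_eq_mul, ← mul_assoc]; exact hx _
    have hf := hall (monom k a - monom k b)
      (hE.1 ▸ (mem_toric k n a b).2 (ha.trans hb.symm))
    rw [map_sub, hφ, hφ, if_pos ⟨ha, rfl⟩, if_neg (fun h => hl h.2.symm), sub_zero] at hf
    exact one_ne_zero hf
end

section
/- Let q be a positive integer. (a) For m = 2q+4, let S be the numerical semigroup generated by n_1 = m, n_2 = m+1, n_3 = (q+1)m−2, n_4 = (q+1)m−1; (b) for m = 2q+5, let S be the numerical semigroup generated by n_1 = m, n_2 = m+1, n_3 = (q+1)m+q+2, n_4 = (q+1)m+q+3. In both cases AP(S,n_i) is not a homogeneous set for any i = 1,2,3,4. Moreover, in case (b) one has (q+2)·n_2 = n_1 + n_3, so n_3 is a torsion element of S and T(S) ≠ ∅, i.e. the tangent cone of S is not Cohen–Macaulay. -/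
open scoped BigOperators

/-- The symmetric family of multiplicity `m = 2q+4`. -/
def symA (q : ℕ) : Fin 4 → ℕ :=
  ![2 * q + 4, 2 * q + 5, (q + 1) * (2 * q + 4) - 2, (q + 1) * (2 * q + 4) - 1]

/-- The symmetric family of multiplicity `m = 2q+5`. -/
def symB (q : ℕ) : Fin 4 → ℕ :=
  ![2 * q + 5, 2 * q + 6, (q + 1) * (2 * q + 5) + q + 2,
    (q + 1) * (2 * q + 5) + q + 3]

theorem two_gen_aux (m a b k r : ℕ) (h : a * m + b * (m + 1) = k * m + r) (hr : r < m) :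
    r ≤ k := by
  have h1 : (a + b) * m + b = k * m + r := by rw [← h]; ring
  have h2 : a + b ≤ k := by
    by_contra hc
    have : (k + 1) * m ≤ (a + b) * m := Nat.mul_le_mul_right m (by omega)
    nlinarith
  have h3 : (a + b) * m ≤ k * m := Nat.mul_le_mul_right m h2
  omega

theorem sval_four (n a : Fin 4 → ℕ) :
    sval n a = a 0 * n 0 + a 1 * n 1 + a 2 * n 2 + a 3 * n 3 := by
  simp [sval, Fin.sum_univ_four]

theorem tlen_four (a : Fin 4 → ℕ) : tlen a = a 0 + a 1 + a 2 + a 3 := by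
  simp [tlen, Fin.sum_univ_four]

theorem symA_eq (p : ℕ) : symA (p + 1) =
    ![2 * p + 6, 2 * p + 7, (p + 1) * (2 * p + 6) + (2 * p + 4),
      (p + 1) * (2 * p + 6) + (2 * p + 5)] := by
  have h : (p + 1 + 1) * (2 * (p + 1) + 4) = (p + 1) * (2 * p + 6) + (2 * p + 6) := by ring
  unfold symA
  rw [h]
  congr 1

theorem symB_eq (p : ℕ) : symB (p + 1) =
    ![2 * p + 7, 2 * p + 8, (p + 2) * (2 * p + 7) + (p + 3),
      (p + 2) * (2 * p + 7) + (p + 4)] := by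
  unfold symB
  congr 1

theorem frobA (p : ℕ) : (2 * p + 2) * (2 * p + 6) + (2 * p + 3) ∉ gen (symA (p + 1)) := by
  rintro ⟨x, hx⟩
  rw [symA_eq, sval_four] at hx
  simp only [Matrix.cons_val] at hx
  generalize x 0 = a at hx
  generalize x 1 = b at hx
  generalize x 2 = c at hx
  generalize x 3 = d at hx
  have hcd : c + d ≤ 1 := by
    by_contra hc
    have : 2 * ((p + 1) * (2 * p + 6) + (2 * p + 4)) ≤
      (c + d) * ((p + 1) * (2 * p + 6) + (2 * p + 4)) := Nat.mul_le_mul_right _ (by omega)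
    nlinarith [Nat.zero_le (a * (2 * p + 6)), Nat.zero_le (b * (2 * p + 7))]
  have hh : (c = 0 ∧ d = 0) ∨ (c = 1 ∧ d = 0) ∨ (c = 0 ∧ d = 1) := by omega
  rcases hh with ⟨rfl, rfl⟩ | ⟨rfl, rfl⟩ | ⟨rfl, rfl⟩
  · have := two_gen_aux (2 * p + 6) a b (2 * p + 2) (2 * p + 3) (by linarith) (by omega)
    omega
  · have := two_gen_aux (2 * p + 6) a b p (2 * p + 5) (by linarith) (by omega)
    omega
  · have := two_gen_aux (2 * p + 6) a b p (2 * p + 4) (by linarith) (by omega)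
    omega

theorem frobB (p : ℕ) : (2 * p + 3) * (2 * p + 7) + (2 * p + 6) ∉ gen (symB (p + 1)) := by
  rintro ⟨x, hx⟩
  rw [symB_eq, sval_four] at hx
  simp only [Matrix.cons_val] at hx
  generalize x 0 = a at hx
  generalize x 1 = b at hx
  generalize x 2 = c at hx
  generalize x 3 = d at hx
  have hcd : c + d ≤ 1 := by
    by_contra hc
    have : 2 * ((p + 2) * (2 * p + 7) + (p + 3)) ≤
      (c + d) * ((p + 2) * (2 * p + 7) + (p + 3)) := Nat.mul_le_mul_right _ (by omega)
    nlinarith [Nat.zero_le (a * (2 * p + 7)), Nat.zero_le (b * (2 * p + 8))]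
  have hh : (c = 0 ∧ d = 0) ∨ (c = 1 ∧ d = 0) ∨ (c = 0 ∧ d = 1) := by omega
  rcases hh with ⟨rfl, rfl⟩ | ⟨rfl, rfl⟩ | ⟨rfl, rfl⟩
  · have := two_gen_aux (2 * p + 7) a b (2 * p + 3) (2 * p + 6) (by linarith) (by omega)
    omega
  · have := two_gen_aux (2 * p + 7) a b (p + 1) (p + 3) (by linarith) (by omega)
    omega
  · have := two_gen_aux (2 * p + 7) a b (p + 1) (p + 2) (by linarith) (by omega)
    omega

theorem not_homog_aux (n : Fin 4 → ℕ) (s F : ℕ) (hF : F ∉ gen n) (a b : Fin 4 → ℕ)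
    (ha : sval n a = s + F) (hb : sval n b = s + F) (h0 : s + F ≠ 0) (hab : tlen a ≠ tlen b) :
    ¬ HomogSet n (Apery n s) := by
  intro h
  refine hab (h (s + F) ⟨⟨a, ha.symm⟩, ?_⟩ h0 a b ha hb)
  rintro ⟨y, hy, he⟩
  have : F = y := by omega
  exact hF (this ▸ hy)

theorem partA (p : ℕ) (i : Fin 4) :
    ¬ HomogSet (symA (p + 1)) (Apery (symA (p + 1)) (symA (p + 1) i)) := by
  have hF := frobA p
  rw [symA_eq] at hF ⊢
  fin_cases i
  · refine not_homog_aux _ _ _ hF ![0, 2 * p + 3, 0, 0] ![0, 0, 1, 1] ?_ ?_ ?_ ?_ <;>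
      simp [sval_four, tlen_four] <;> (try ring) <;> (try omega)
  · refine not_homog_aux _ _ _ hF ![p + 2, 0, 1, 0] ![0, 0, 0, 2] ?_ ?_ ?_ ?_ <;>
      simp [sval_four, tlen_four] <;> (try ring) <;> (try omega)
  · refine not_homog_aux _ _ _ hF ![p + 3, 2 * p + 1, 0, 0] ![0, 2 * p + 2, 0, 1] ?_ ?_ ?_ ?_ <;>
      simp [sval_four, tlen_four] <;> (try ring) <;> (try omega)
  · refine not_homog_aux _ _ _ hF ![p + 2, 2 * p + 2, 0, 0] ![p + 1, 0, 2, 0] ?_ ?_ ?_ ?_ <;>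
      simp [sval_four, tlen_four] <;> (try ring) <;> (try omega)

theorem partB (p : ℕ) (i : Fin 4) :
    ¬ HomogSet (symB (p + 1)) (Apery (symB (p + 1)) (symB (p + 1) i)) := by
  have hF := frobB p
  rw [symB_eq] at hF ⊢
  fin_cases i
  · refine not_homog_aux _ _ _ hF ![0, p + 2, 0, 1] ![0, 0, 2, 0] ?_ ?_ ?_ ?_ <;>
      simp [sval_four, tlen_four] <;> (try ring) <;> (try omega)
  · refine not_homog_aux _ _ _ hF ![2 * p + 5, 0, 0, 0] ![0, 0, 1, 1] ?_ ?_ ?_ ?_ <;>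
      simp [sval_four, tlen_four] <;> (try ring) <;> (try omega)
  · refine not_homog_aux _ _ _ hF ![2 * p + 4, p + 2, 0, 0] ![0, p + 1, 0, 2] ?_ ?_ ?_ ?_ <;>
      simp [sval_four, tlen_four] <;> (try ring) <;> (try omega)
  · refine not_homog_aux _ _ _ hF ![2 * p + 3, p + 3, 0, 0] ![2 * p + 4, 0, 1, 0] ?_ ?_ ?_ ?_ <;>
      simp [sval_four, tlen_four] <;> (try ring) <;> (try omega)

theorem torsB (p : ℕ) : symB (p + 1) 2 ∈ Torsion (symB (p + 1)) 0 := by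
  rw [symB_eq]
  refine ⟨⟨![0, 0, 1, 0], by simp [sval_four]⟩, 1, one_pos, ?_⟩
  have h1 : ordS ![2 * p + 7, 2 * p + 8, (p + 2) * (2 * p + 7) + (p + 3),
      (p + 2) * (2 * p + 7) + (p + 4)] ((p + 2) * (2 * p + 7) + (p + 3)) ≤ 1 := by
    apply csSup_le
    · exact ⟨1, ![0, 0, 1, 0], by simp [sval_four], by simp [tlen_four]⟩
    · rintro l ⟨x, hx, rfl⟩
      rw [sval_four] at hx
      rw [tlen_four]
      simp only [Matrix.cons_val] at hx
      generalize x 0 = a at hx ⊢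
      generalize x 1 = b at hx ⊢
      generalize x 2 = c at hx ⊢
      generalize x 3 = d at hx ⊢
      have hcd : c + d ≤ 1 := by
        by_contra hc
        have : 2 * ((p + 2) * (2 * p + 7) + (p + 3)) ≤
          (c + d) * ((p + 2) * (2 * p + 7) + (p + 3)) := Nat.mul_le_mul_right _ (by omega)
        nlinarith [Nat.zero_le (a * (2 * p + 7)), Nat.zero_le (b * (2 * p + 8))]
      have hh : (c = 0 ∧ d = 0) ∨ (c = 1 ∧ d = 0) ∨ (c = 0 ∧ d = 1) := by omega
      rcases hh with ⟨rfl, rfl⟩ | ⟨rfl, rfl⟩ | ⟨rfl, rfl⟩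
      · have := two_gen_aux (2 * p + 7) a b (p + 2) (p + 3) (by linarith) (by omega)
        omega
      · have ha : a = 0 := by nlinarith [Nat.zero_le (a * p), Nat.zero_le (b * p)]
        have hb : b = 0 := by nlinarith [Nat.zero_le (a * p), Nat.zero_le (b * p)]
        omega
      · nlinarith [Nat.zero_le (a * (2 * p + 7)), Nat.zero_le (b * (2 * p + 8))]
  have h2 : p + 3 ≤ ordS ![2 * p + 7, 2 * p + 8, (p + 2) * (2 * p + 7) + (p + 3),
      (p + 2) * (2 * p + 7) + (p + 4)]
      ((p + 2) * (2 * p + 7) + (p + 3) + 1 * (2 * p + 7)) := by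
    apply le_csSup
    · refine ⟨(p + 2) * (2 * p + 7) + (p + 3) + 1 * (2 * p + 7), ?_⟩
      rintro l ⟨x, hx, rfl⟩
      rw [← hx, sval_four, tlen_four]
      simp only [Matrix.cons_val]
      gcongr <;> exact Nat.le_mul_of_pos_right _ (by positivity)
    · exact ⟨![0, p + 3, 0, 0], by simp [sval_four]; ring, by simp [tlen_four]⟩
  simp only [Matrix.cons_val] at *
  omega

/-- for both symmetric families, no Apéry set `AP(S,nᵢ)` is
homogeneous; in case (b), `(q+2)·n₂ = n₁ + n₃`, so `n₃` is a torsion element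
and `T(S) ≠ ∅` (the tangent cone is not Cohen–Macaulay). -/
theorem statement11 (q : ℕ) (hq : 0 < q) :
    (∀ i : Fin 4, ¬ HomogSet (symA q) (Apery (symA q) (symA q i))) ∧
    (∀ i : Fin 4, ¬ HomogSet (symB q) (Apery (symB q) (symB q i))) ∧
    (q + 2) * symB q 1 = symB q 0 + symB q 2 ∧
    symB q 2 ∈ Torsion (symB q) 0 ∧
    Torsion (symB q) 0 ≠ ∅ := by
  obtain ⟨p, rfl⟩ : ∃ p, q = p + 1 := ⟨q - 1, by omega⟩
  refine ⟨partA p, partB p, ?_, torsB p, ?_⟩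
  · rw [symB_eq]
    simp only [Matrix.cons_val]
    ring
  · exact Set.nonempty_iff_ne_empty.mp ⟨_, torsB p⟩
end

section
/- Let S be the gluing of numerical semigroups S_1 and S_2 determined by p ∈ S_1 and q ∈ S_2. Then for every s ∈ S_1: (1) AP(S, qs) = {q·z_1 + p·z_2 : z_1 ∈ AP(S_1,s), z_2 ∈ AP(S_2,q)}; (2) if q·z_1 + p·z_2 ∈ AP(S, qs) with z_1 ∈ S_1 and z_2 ∈ S_2, then z_1 ∈ AP(S_1,s); (3) if p ∉ AP(S_1,s), then every z ∈ AP(S, qs) can be written as z = q·z_1 + p·z_2 with z_1 ∈ S_1 and z_2 ∈ S_2 in a unique way; (4) if q·z_1 + p·z_2 ∈ AP(S, qs) with z_1 ∈ S_1, z_2 ∈ S_2 and p ∉ AP(S_1,s), then z_2 ∈ AP(S_2,q). -/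
open scoped BigOperators

theorem gen_add {d : ℕ} {n : Fin d → ℕ} {x y : ℕ} (hx : x ∈ gen n) (hy : y ∈ gen n) :
    x + y ∈ gen n := by
  obtain ⟨a, rfl⟩ := hx
  obtain ⟨b, rfl⟩ := hy
  exact ⟨a + b, by simp [sval, add_mul, Finset.sum_add_distrib]⟩

theorem gen_mul {d : ℕ} {n : Fin d → ℕ} {x : ℕ} (k : ℕ) (hx : x ∈ gen n) :
    x * k ∈ gen n := by
  obtain ⟨a, rfl⟩ := hx
  refine ⟨fun i => k * a i, ?_⟩
  simp only [sval, Finset.sum_mul]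
  exact Finset.sum_congr rfl fun i _ => by ring

theorem gen_glue {d e : ℕ} (mg : Fin d → ℕ) (ng : Fin e → ℕ) (p q z : ℕ) :
    z ∈ gen (glueGen mg ng p q) ↔
      ∃ z1 ∈ gen mg, ∃ z2 ∈ gen ng, z = q * z1 + p * z2 := by
  constructor
  · rintro ⟨a, rfl⟩
    refine ⟨_, ⟨fun i => a (Fin.castAdd e i), rfl⟩, _, ⟨fun i => a (Fin.natAdd d i), rfl⟩, ?_⟩
    simp only [sval, glueGen, Fin.sum_univ_add, Fin.append_left, Fin.append_right,
      Finset.mul_sum]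
    congr 1 <;> exact Finset.sum_congr rfl fun i _ => by ring
  · rintro ⟨_, ⟨a, rfl⟩, _, ⟨b, rfl⟩, rfl⟩
    refine ⟨Fin.append a b, ?_⟩
    simp only [sval, glueGen, Fin.sum_univ_add, Fin.append_left, Fin.append_right,
      Finset.mul_sum]
    congr 1 <;> exact Finset.sum_congr rfl fun i _ => by ring

theorem apery_decomp {d : ℕ} {n : Fin d → ℕ} {q : ℕ} (hq0 : 0 < q) (x : ℕ) :
    x ∈ gen n → ∃ y ∈ Apery n q, ∃ k, x = y + q * k := by
  induction x using Nat.strong_induction_on with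
  | _ x ih =>
    intro hx
    by_cases h : ∃ y ∈ gen n, x = q + y
    · obtain ⟨y, hy, rfl⟩ := h
      obtain ⟨w, hw, k, hk⟩ := ih y (by omega) hy
      exact ⟨w, hw, k + 1, by rw [hk]; ring⟩
    · exact ⟨x, ⟨hx, h⟩, 0, by simp⟩

/-- Two expressions differ by a multiple of `(p, -q)`. -/
theorem glue_diff {p q a b c d : ℕ} (hq0 : 0 < q) (hcop : Nat.Coprime p q)
    (h : q * a + p * b = q * c + p * d) (hbd : b ≤ d) :
    ∃ k, d = b + q * k ∧ a = c + p * k := by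
  obtain ⟨t, rfl⟩ := Nat.exists_eq_add_of_le hbd
  have h1 : q * a = q * c + p * t := by linarith [mul_add p b t]
  have h2 : q ∣ p * t := (Nat.dvd_add_right (dvd_mul_right q c)).1 (h1 ▸ dvd_mul_right q a)
  obtain ⟨k, rfl⟩ := hcop.symm.dvd_of_dvd_mul_left h2
  refine ⟨k, rfl, Nat.eq_of_mul_eq_mul_left hq0 ?_⟩
  rw [h1]; ring

/-- Apéry sets of a gluing `S = ⟨q·S₁, p·S₂⟩`. -/
theorem statement13
    {d e : ℕ} (hd : 0 < d) (he : 0 < e)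
    (mg : Fin d → ℕ) (ng : Fin e → ℕ)
    (hmmono : StrictMono mg) (hnmono : StrictMono ng)
    (hmpos : 0 < mg ⟨0, hd⟩) (hnpos : 0 < ng ⟨0, he⟩)
    (hmnum : IsNumerical mg) (hnnum : IsNumerical ng)
    (hmmin : MinGen mg) (hnmin : MinGen ng)
    (p q : ℕ) (hp : p ∈ gen mg) (hq : q ∈ gen ng)
    (hp0 : 0 < p) (hq0 : 0 < q) (hcop : Nat.Coprime p q)
    (hpn : p ∉ Set.range mg) (hqn : q ∉ Set.range ng)
    (s : ℕ) (hs : s ∈ gen mg) :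
    (Apery (glueGen mg ng p q) (q * s) =
      {z : ℕ | ∃ z1 ∈ Apery mg s, ∃ z2 ∈ Apery ng q, z = q * z1 + p * z2}) ∧
    (∀ z1 ∈ gen mg, ∀ z2 ∈ gen ng,
      q * z1 + p * z2 ∈ Apery (glueGen mg ng p q) (q * s) →
        z1 ∈ Apery mg s) ∧
    (p ∉ Apery mg s →
      ∀ z ∈ Apery (glueGen mg ng p q) (q * s),
        ∃ z1 z2 : ℕ, z1 ∈ gen mg ∧ z2 ∈ gen ng ∧ z = q * z1 + p * z2 ∧
          ∀ w1 w2 : ℕ, w1 ∈ gen mg → w2 ∈ gen ng → z = q * w1 + p * w2 →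
            w1 = z1 ∧ w2 = z2) ∧
    (p ∉ Apery mg s →
      ∀ z1 ∈ gen mg, ∀ z2 ∈ gen ng,
        q * z1 + p * z2 ∈ Apery (glueGen mg ng p q) (q * s) →
          z2 ∈ Apery ng q) := by
  have h2 : ∀ z1 ∈ gen mg, ∀ z2 ∈ gen ng,
      q * z1 + p * z2 ∈ Apery (glueGen mg ng p q) (q * s) → z1 ∈ Apery mg s := by
    rintro z1 h1 z2 h2 ⟨-, h⟩
    refine ⟨h1, ?_⟩
    rintro ⟨y, hy, rfl⟩
    exact h ⟨q * y + p * z2, (gen_glue ..).2 ⟨y, hy, z2, h2, rfl⟩, by ring⟩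
  have h4 : p ∉ Apery mg s → ∀ z1 ∈ gen mg, ∀ z2 ∈ gen ng,
      q * z1 + p * z2 ∈ Apery (glueGen mg ng p q) (q * s) → z2 ∈ Apery ng q := by
    intro hpA z1 h1 z2 hz2 h
    refine ⟨hz2, ?_⟩
    rintro ⟨y, hy, rfl⟩
    have hps : ∃ y ∈ gen mg, p = s + y := by
      by_contra hc
      exact hpA ⟨hp, hc⟩
    obtain ⟨w, hw, hpw⟩ := hps
    have e1 : q * z1 + p * (q + y) = q * (z1 + p) + p * y := by ring
    rw [e1] at h
    exact (h2 _ (gen_add h1 hp) y hy h).2 ⟨z1 + w, gen_add h1 hw, by omega⟩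
  refine ⟨?_, h2, ?_, h4⟩
  · ext z
    constructor
    · intro hz
      obtain ⟨z1, hz1, z2, hz2, rfl⟩ := (gen_glue ..).1 hz.1
      obtain ⟨w, hw, k, rfl⟩ := apery_decomp hq0 z2 hz2
      have e1 : q * z1 + p * (w + q * k) = q * (z1 + p * k) + p * w := by ring
      rw [e1] at hz
      exact ⟨_, h2 _ (gen_add hz1 (gen_mul k hp)) w hw.1 hz, w, hw, e1⟩
    · rintro ⟨z1, hz1, z2, hz2, rfl⟩
      refine ⟨(gen_glue ..).2 ⟨z1, hz1.1, z2, hz2.1, rfl⟩, ?_⟩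
      rintro ⟨y, hy, h⟩
      obtain ⟨w1, hw1, w2, hw2, rfl⟩ := (gen_glue ..).1 hy
      have h' : q * z1 + p * z2 = q * (s + w1) + p * w2 := by rw [h]; ring
      rcases le_or_gt z2 w2 with hle | hlt
      · obtain ⟨k, -, hk⟩ := glue_diff hq0 hcop h' hle
        exact hz1.2 ⟨w1 + p * k, gen_add hw1 (gen_mul k hp), by omega⟩
      · obtain ⟨k, hk, -⟩ := glue_diff hq0 hcop h'.symm hlt.le
        cases k with
        | zero => simp at hk; omega
        | succ k =>
          exact hz2.2 ⟨w2 + q * k, gen_add hw2 (gen_mul k hq), by rw [hk]; ring⟩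
  · intro hpA z hz
    obtain ⟨z1, hz1, z2, hz2, rfl⟩ := (gen_glue ..).1 hz.1
    refine ⟨z1, z2, hz1, hz2, rfl, ?_⟩
    intro w1 w2 hw1 hw2 h
    have a2 := h4 hpA z1 hz1 z2 hz2 hz
    have b2 := h4 hpA w1 hw1 w2 hw2 (h ▸ hz)
    rcases le_total z2 w2 with hle | hle
    · obtain ⟨k, hk, hk'⟩ := glue_diff hq0 hcop h hle
      cases k with
      | zero => simp at hk hk'; exact ⟨hk'.symm, hk⟩
      | succ k =>
        exact (b2.2 ⟨z2 + q * k, gen_add hz2 (gen_mul k hq), by rw [hk]; ring⟩).elim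
    · obtain ⟨k, hk, hk'⟩ := glue_diff hq0 hcop h.symm hle
      cases k with
      | zero => simp at hk hk'; exact ⟨hk', hk.symm⟩
      | succ k =>
        exact (a2.2 ⟨w2 + q * k, gen_add hw2 (gen_mul k hq), by rw [hk]; ring⟩).elim
end
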